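/- Let Δ ≥ 9 be an integer and let R and B be disjoint subsets of the integer grid [Δ]² = {1, …, Δ} × {1, …, Δ} ⊂ ℝ². Let y : R ∪ B → ℝ satisfy the feasibility condition y(r) + y(b) ≤ ‖r − b‖ + 2/Δ³³ for every r ∈ R and b ∈ B. Call a pair (r, b) ∈ R × B eligible if y(r) + y(b) > ‖r − b‖ − 2/Δ³³. Then for any two eligible pairs (a, b) and (c, d) whose four endpoints a, b, c, d are distinct and do not all lie on a common line, the closed segment with endpoints a, b and the closed segment with endpoints c, d are disjoint. -/

import Mathlib

/-!
If the segments `ab` and `cd` meet in `a + t(b - a) = c + s(d - c)`, put `U = b - a`, `V = d - c`.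
Then `d - a = tU + (1 - s)V` and `b - c = (1 - t)U + sV`, so
`‖U‖ + ‖V‖ - ‖a - d‖ - ‖c - b‖` is a sum of two nonnegative triangle-inequality defects.
Eligibility of `(a, b)`, `(c, d)` together with feasibility of `(a, d)`, `(c, b)` makes this sum
less than `8/Δ³³`.

On the other hand, let `D = U × V` be the cross product, an integer.  It is nonzero, since
otherwise the two lines are parallel and share a point, making the four points collinear.
Cramer's rule shows that `tD` and `sD` are integers.  The endpoints being distinct, `t` and `1 - s`
are both positive, or `1 - t` and `s` are; hence for one of the two triangles the coefficients
`α, β` satisfy `αβD² ≥ 1`, and `triangle_defect_lower_bound` bounds its defect below by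
`1/(32Δ³)`, which exceeds `8/Δ³³`.
-/

noncomputable section

/-- Points of the Euclidean plane. -/
abbrev Pt := EuclideanSpace ℝ (Fin 2)

/-- `p` is a point of the integer grid `[Δ]² = {1, …, Δ} × {1, …, Δ}`,
viewed as a subset of the Euclidean plane. -/
def InGrid (Δ : ℕ) (p : Pt) : Prop :=
  ∀ i : Fin 2, ∃ m : ℤ, 1 ≤ m ∧ m ≤ (Δ : ℤ) ∧ p i = (m : ℝ)

/-- Quantitative triangle inequality for `αU + βV`, where `x, z, w` are the lengths of `U`, `V` and
`αU + βV`, `p` is the inner product and `q` the cross product of `U` and `V`.  It comes from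
`(αx + βz)² - w² = 2αβ(xz - p)` and `(xz - p)(xz + p) = q²`. -/
theorem triangle_defect_lower_bound {α β x z w p q M : ℝ} (hα : 0 ≤ α) (hα1 : α ≤ 1)
    (hβ : 0 ≤ β) (hβ1 : β ≤ 1) (hx : 0 ≤ x) (hz : 0 ≤ z) (hw : 0 ≤ w)
    (hxM : x ≤ M) (hzM : z ≤ M)
    (hw2 : w ^ 2 = α ^ 2 * x ^ 2 + β ^ 2 * z ^ 2 + 2 * α * β * p)
    (hpq : p ^ 2 + q ^ 2 = x ^ 2 * z ^ 2) (hq : 1 ≤ α * β * q ^ 2) :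
    1 ≤ (α * x + β * z - w) * (4 * M ^ 3) := by
  have hM : 0 ≤ M := hx.trans hxM
  have hxz : 0 ≤ x * z := mul_nonneg hx hz
  have hxzM : x * z ≤ M ^ 2 := by nlinarith
  have hαβ : 0 ≤ α * β := mul_nonneg hα hβ
  have hp : |p| ≤ x * z := abs_le_of_sq_le_sq (by nlinarith [sq_nonneg q]) hxz
  obtain ⟨hp1, hp2⟩ := abs_le.mp hp
  have h1 : q ^ 2 ≤ (x * z - p) * (2 * M ^ 2) := by
    have : q ^ 2 = (x * z - p) * (x * z + p) := by linarith
    rw [this]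
    exact mul_le_mul_of_nonneg_left (by linarith) (by linarith)
  have h2 : 1 ≤ α * β * ((x * z - p) * (2 * M ^ 2)) :=
    hq.trans (mul_le_mul_of_nonneg_left h1 hαβ)
  have hαx : α * x ≤ M := by nlinarith
  have hβz : β * z ≤ M := by nlinarith
  have hS : 0 ≤ α * x + β * z := by positivity
  have hdiff : (α * x + β * z) ^ 2 - w ^ 2 = 2 * (α * β * (x * z - p)) := by rw [hw2]; ring
  have hwS : w ≤ α * x + β * z := by
    refine (sq_le_sq₀ hw hS).mp ?_
    have : 0 ≤ α * β * (x * z - p) := mul_nonneg hαβ (by linarith)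
    linarith
  have h3 : (α * x + β * z - w) * (α * x + β * z + w) ≤ (α * x + β * z - w) * (4 * M) :=
    mul_le_mul_of_nonneg_left (by linarith) (by linarith)
  have h4 := mul_le_mul_of_nonneg_right h3 (sq_nonneg M)
  nlinarith

theorem dist_sq_coords (p q : Pt) :
    dist p q ^ 2 = (q 0 - p 0) ^ 2 + (q 1 - p 1) ^ 2 := by
  rw [EuclideanSpace.dist_eq, Real.sq_sqrt (by positivity), Fin.sum_univ_two, Real.dist_eq,
    Real.dist_eq, sq_abs, sq_abs]
  ring

theorem dist_le_of_inGrid {Δ : ℕ} {p q : Pt} (hp : InGrid Δ p) (hq : InGrid Δ q) :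
    dist p q ≤ 2 * (Δ : ℝ) := by
  have key : ∀ i, |q i - p i| ≤ (Δ : ℝ) := by
    intro i
    obtain ⟨m, hm1, hm2, hm⟩ := hp i
    obtain ⟨n, hn1, hn2, hn⟩ := hq i
    have hm1' : (1 : ℝ) ≤ m := by exact_mod_cast hm1
    have hm2' : (m : ℝ) ≤ Δ := by exact_mod_cast hm2
    have hn1' : (1 : ℝ) ≤ n := by exact_mod_cast hn1
    have hn2' : (n : ℝ) ≤ Δ := by exact_mod_cast hn2
    rw [hm, hn, abs_le]
    constructor <;> linarith
  have h0 := sq_le_sq' (abs_le.mp (key 0)).1 (abs_le.mp (key 0)).2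
  have h1 := sq_le_sq' (abs_le.mp (key 1)).1 (abs_le.mp (key 1)).2
  refine (sq_le_sq₀ dist_nonneg (by positivity)).mp ?_
  rw [dist_sq_coords]
  nlinarith [sq_nonneg (Δ : ℝ)]

/-- Positive fractions `α, β` with common denominator `q` satisfy `αβq² ≥ 1`. -/
theorem one_le_mul_sq_of_int_mul {α β q : ℝ} (hα : 0 < α) (hβ : 0 < β) (hq : q ≠ 0)
    {m n : ℤ} (hm : α * q = m) (hn : β * q = n) : 1 ≤ α * β * q ^ 2 := by
  have h : α * β * q ^ 2 = ((m * n : ℤ) : ℝ) := by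
    push_cast
    rw [← hm, ← hn]
    ring
  have hpos : 0 < α * β * q ^ 2 := by positivity
  rw [h] at hpos ⊢
  exact_mod_cast hpos

/-- Four points `a, b, c, d` with `a ≠ b`, with `ab` parallel to `cd`, whose lines share a point,
are collinear. -/
theorem collinear_of_cross_eq_zero {a b c d : Pt} {t s : ℝ} (hab : a ≠ b)
    (h0 : a 0 + t * (b 0 - a 0) = c 0 + s * (d 0 - c 0))
    (h1 : a 1 + t * (b 1 - a 1) = c 1 + s * (d 1 - c 1))
    (hD : (b 0 - a 0) * (d 1 - c 1) - (b 1 - a 1) * (d 0 - c 0) = 0) :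
    Collinear ℝ ({a, b, c, d} : Set Pt) := by
  have hN : (b 0 - a 0) ^ 2 + (b 1 - a 1) ^ 2 ≠ 0 := by
    rw [← dist_sq_coords]
    exact pow_ne_zero 2 (dist_ne_zero.mpr hab)
  -- `d - c = k (b - a)`, with `k` the coefficient of the orthogonal projection.
  obtain ⟨k, hk0, hk1⟩ : ∃ k : ℝ, d 0 - c 0 = k * (b 0 - a 0) ∧ d 1 - c 1 = k * (b 1 - a 1) := by
    refine ⟨((b 0 - a 0) * (d 0 - c 0) + (b 1 - a 1) * (d 1 - c 1)) /
      ((b 0 - a 0) ^ 2 + (b 1 - a 1) ^ 2), ?_, ?_⟩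
    · rw [div_mul_eq_mul_div, eq_div_iff hN]
      linear_combination -(b 1 - a 1) * hD
    · rw [div_mul_eq_mul_div, eq_div_iff hN]
      linear_combination (b 0 - a 0) * hD
  rw [collinear_iff_of_mem (p₀ := a) (by simp)]
  refine ⟨b - a, ?_⟩
  have coord : ∀ (p : Pt) (r : ℝ), p 0 = r * (b 0 - a 0) + a 0 → p 1 = r * (b 1 - a 1) + a 1 →
      p = r • (b - a) +ᵥ a := by
    intro p r e0 e1
    ext i
    fin_cases i
    · simpa using e0
    · simpa using e1
  intro p hp
  simp only [Set.mem_insert_iff, Set.mem_singleton_iff] at hp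
  rcases hp with rfl | rfl | rfl | rfl
  · exact ⟨0, coord _ _ (by ring) (by ring)⟩
  · exact ⟨1, coord _ _ (by ring) (by ring)⟩
  · exact ⟨t - s * k, coord _ _ (by linear_combination -h0 - s * hk0)
      (by linear_combination -h1 - s * hk1)⟩
  · exact ⟨t - s * k + k, coord _ _ (by linear_combination -h0 + (1 - s) * hk0)
      (by linear_combination -h1 + (1 - s) * hk1)⟩

/-- Let `Δ ≥ 9`, let `R, B` be disjoint subsets of the grid `[Δ]²`, and let
`y` be dual weights satisfying `y(r) + y(b) ≤ ‖r − b‖ + 2/Δ³³` for all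
`r ∈ R`, `b ∈ B`. Then for any two eligible pairs `(a, b)` and `(c, d)`
(i.e. pairs with `y(·) + y(·) > ‖· − ·‖ − 2/Δ³³`) whose four endpoints are
distinct and not all collinear, the closed segments `ab` and `cd` are
disjoint. -/
theorem eligible_segments_disjoint
    (Δ : ℕ) (hΔ : 9 ≤ Δ) (R B : Finset Pt)
    (hRgrid : ∀ p ∈ R, InGrid Δ p) (hBgrid : ∀ p ∈ B, InGrid Δ p)
    (hdisj : Disjoint R B)
    (y : Pt → ℝ)
    (hfeas : ∀ r ∈ R, ∀ b ∈ B, y r + y b ≤ dist r b + 2 / (Δ : ℝ) ^ 33)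
    (a c : Pt) (b d : Pt)
    (ha : a ∈ R) (hb : b ∈ B) (hc : c ∈ R) (hd : d ∈ B)
    (helig₁ : y a + y b > dist a b - 2 / (Δ : ℝ) ^ 33)
    (helig₂ : y c + y d > dist c d - 2 / (Δ : ℝ) ^ 33)
    (hab : a ≠ b) (hac : a ≠ c) (had : a ≠ d)
    (hbc : b ≠ c) (hbd : b ≠ d) (hcd : c ≠ d)
    (hncol : ¬ Collinear ℝ ({a, b, c, d} : Set Pt)) :
    Disjoint (segment ℝ a b) (segment ℝ c d) := by
  rw [Set.disjoint_left]
  intro p hp1 hp2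
  rw [segment_eq_image'] at hp1 hp2
  obtain ⟨t, ⟨ht0, ht1⟩, rfl⟩ := hp1
  obtain ⟨s, ⟨hs0, hs1⟩, hst⟩ := hp2
  change c + s • (d - c) = a + t • (b - a) at hst
  have hcoord : ∀ i, a i + t * (b i - a i) = c i + s * (d i - c i) := by
    intro i
    have := congrArg (fun v : Pt => v i) hst
    simpa using this.symm
  have h0 := hcoord 0
  have h1 := hcoord 1
  have ext2 : ∀ u v : Pt, u 0 = v 0 → u 1 = v 1 → u = v := by
    intro u v e0 e1
    ext i
    fin_cases i
    · exact e0
    · exact e1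
  have hD : (b 0 - a 0) * (d 1 - c 1) - (b 1 - a 1) * (d 0 - c 0) ≠ 0 :=
    fun h => hncol (collinear_of_cross_eq_zero hab h0 h1 h)
  obtain ⟨D, hDdef⟩ : ∃ D, D = (b 0 - a 0) * (d 1 - c 1) - (b 1 - a 1) * (d 0 - c 0) := ⟨_, rfl⟩
  rw [← hDdef] at hD
  have hΔ1 : (9 : ℝ) ≤ Δ := by exact_mod_cast hΔ
  have hUM := dist_le_of_inGrid (hRgrid a ha) (hBgrid b hb)
  have hVM := dist_le_of_inGrid (hRgrid c hc) (hBgrid d hd)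
  have hUsq := dist_sq_coords a b
  have hVsq := dist_sq_coords c d
  -- Cramer's rule: `t D` and `s D` are integers.
  obtain ⟨D', hD'⟩ : ∃ m : ℤ, D = m := by
    obtain ⟨a0, -, -, ea0⟩ := hRgrid a ha 0
    obtain ⟨a1, -, -, ea1⟩ := hRgrid a ha 1
    obtain ⟨b0, -, -, eb0⟩ := hBgrid b hb 0
    obtain ⟨b1, -, -, eb1⟩ := hBgrid b hb 1
    obtain ⟨c0, -, -, ec0⟩ := hRgrid c hc 0
    obtain ⟨c1, -, -, ec1⟩ := hRgrid c hc 1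
    obtain ⟨d0, -, -, ed0⟩ := hBgrid d hd 0
    obtain ⟨d1, -, -, ed1⟩ := hBgrid d hd 1
    refine ⟨(b0 - a0) * (d1 - c1) - (b1 - a1) * (d0 - c0), ?_⟩
    push_cast
    rw [hDdef, ea0, ea1, eb0, eb1, ec0, ec1, ed0, ed1]
  obtain ⟨m, hm⟩ : ∃ m : ℤ, t * D = m := by
    obtain ⟨a0, -, -, ea0⟩ := hRgrid a ha 0
    obtain ⟨a1, -, -, ea1⟩ := hRgrid a ha 1
    obtain ⟨c0, -, -, ec0⟩ := hRgrid c hc 0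
    obtain ⟨c1, -, -, ec1⟩ := hRgrid c hc 1
    obtain ⟨d0, -, -, ed0⟩ := hBgrid d hd 0
    obtain ⟨d1, -, -, ed1⟩ := hBgrid d hd 1
    refine ⟨(c0 - a0) * (d1 - c1) - (c1 - a1) * (d0 - c0), ?_⟩
    push_cast
    rw [hDdef, ← ea0, ← ea1, ← ec0, ← ec1, ← ed0, ← ed1]
    linear_combination (d 1 - c 1) * h0 - (d 0 - c 0) * h1
  obtain ⟨n, hn⟩ : ∃ n : ℤ, s * D = n := by
    obtain ⟨a0, -, -, ea0⟩ := hRgrid a ha 0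
    obtain ⟨a1, -, -, ea1⟩ := hRgrid a ha 1
    obtain ⟨b0, -, -, eb0⟩ := hBgrid b hb 0
    obtain ⟨b1, -, -, eb1⟩ := hBgrid b hb 1
    obtain ⟨c0, -, -, ec0⟩ := hRgrid c hc 0
    obtain ⟨c1, -, -, ec1⟩ := hRgrid c hc 1
    refine ⟨(b1 - a1) * (c0 - a0) - (b0 - a0) * (c1 - a1), ?_⟩
    push_cast
    rw [hDdef, ← ea0, ← ea1, ← eb0, ← eb1, ← ec0, ← ec1]
    linear_combination (b 1 - a 1) * h0 - (b 0 - a 0) * h1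
  have hm' : (1 - t) * D = ((D' - m : ℤ) : ℝ) := by
    push_cast
    rw [← hD', ← hm]
    ring
  have hn' : (1 - s) * D = ((D' - n : ℤ) : ℝ) := by
    push_cast
    rw [← hD', ← hn]
    ring
  have hpq : ((b 0 - a 0) * (d 0 - c 0) + (b 1 - a 1) * (d 1 - c 1)) ^ 2 + D ^ 2 =
      dist a b ^ 2 * dist c d ^ 2 := by
    rw [hUsq, hVsq, hDdef]
    ring
  -- `d - a = t U + (1 - s) V` and `b - c = (1 - t) U + s V`.
  have had2 : dist a d ^ 2 = t ^ 2 * dist a b ^ 2 + (1 - s) ^ 2 * dist c d ^ 2 +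
      2 * t * (1 - s) * ((b 0 - a 0) * (d 0 - c 0) + (b 1 - a 1) * (d 1 - c 1)) := by
    have e0 : d 0 - a 0 = t * (b 0 - a 0) + (1 - s) * (d 0 - c 0) := by linear_combination -h0
    have e1 : d 1 - a 1 = t * (b 1 - a 1) + (1 - s) * (d 1 - c 1) := by linear_combination -h1
    rw [dist_sq_coords, hUsq, hVsq, e0, e1]
    ring
  have hcb2 : dist c b ^ 2 = (1 - t) ^ 2 * dist a b ^ 2 + s ^ 2 * dist c d ^ 2 +
      2 * (1 - t) * s * ((b 0 - a 0) * (d 0 - c 0) + (b 1 - a 1) * (d 1 - c 1)) := by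
    have e0 : b 0 - c 0 = (1 - t) * (b 0 - a 0) + s * (d 0 - c 0) := by linear_combination h0
    have e1 : b 1 - c 1 = (1 - t) * (b 1 - a 1) + s * (d 1 - c 1) := by linear_combination h1
    rw [dist_sq_coords, hUsq, hVsq, e0, e1]
    ring
  -- The plain triangle inequality through the common point, for both triangles.
  have hTad : dist a d ≤ t * dist a b + (1 - s) * dist c d := by
    have h := dist_triangle a (a + t • (b - a)) d
    nth_rw 2 [← hst] at h
    have e1 : dist a (a + t • (b - a)) = t * dist a b := by
      rw [dist_self_add_right, norm_smul, Real.norm_of_nonneg ht0, dist_eq_norm' a b]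
    have e2 : dist (c + s • (d - c)) d = (1 - s) * dist c d := by
      have : d - (c + s • (d - c)) = (1 - s) • (d - c) := by module
      rw [dist_eq_norm', this, norm_smul, Real.norm_of_nonneg (by linarith), dist_eq_norm' c d]
    simpa only [e1, e2] using h
  have hTcb : dist c b ≤ (1 - t) * dist a b + s * dist c d := by
    have h := dist_triangle c (c + s • (d - c)) b
    nth_rw 2 [hst] at h
    have e1 : dist c (c + s • (d - c)) = s * dist c d := by
      rw [dist_self_add_right, norm_smul, Real.norm_of_nonneg hs0, dist_eq_norm' c d]
    have e2 : dist (a + t • (b - a)) b = (1 - t) * dist a b := by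
      have : b - (a + t • (b - a)) = (1 - t) • (b - a) := by module
      rw [dist_eq_norm', this, norm_smul, Real.norm_of_nonneg (by linarith), dist_eq_norm' a b]
    rw [e1, e2] at h
    linarith
  have hM3 : (0 : ℝ) ≤ 4 * (2 * (Δ : ℝ)) ^ 3 := by positivity
  have hgap : 1 ≤ (dist a b + dist c d - dist a d - dist c b) * (4 * (2 * (Δ : ℝ)) ^ 3) := by
    by_cases hcase : 0 < t ∧ s < 1
    · obtain ⟨ht, hs⟩ := hcase
      refine (triangle_defect_lower_bound ht0 ht1 (by linarith) (by linarith) dist_nonneg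
        dist_nonneg dist_nonneg hUM hVM had2 hpq
        (one_le_mul_sq_of_int_mul ht (by linarith) hD hm hn')).trans ?_
      exact mul_le_mul_of_nonneg_right (by linarith) hM3
    · -- The common point is `a` or `d`; it is then neither `b` nor `c`.
      have hts : t < 1 ∧ 0 < s := by
        rw [not_and_or, not_lt, not_lt] at hcase
        rcases hcase with h | h
        · have ht : t = 0 := le_antisymm h ht0
          refine ⟨by linarith, lt_of_le_of_ne hs0 fun hs => hac ?_⟩
          rw [ht, ← hs] at h0 h1
          exact ext2 _ _ (by linarith) (by linarith)
        · have hs : s = 1 := le_antisymm hs1 h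
          refine ⟨lt_of_le_of_ne ht1 fun ht => hbd ?_, by linarith⟩
          rw [ht, hs] at h0 h1
          exact ext2 _ _ (by linarith) (by linarith)
      obtain ⟨ht, hs⟩ := hts
      refine (triangle_defect_lower_bound (by linarith) (by linarith) hs0 hs1 dist_nonneg
        dist_nonneg dist_nonneg hUM hVM hcb2 hpq
        (one_le_mul_sq_of_int_mul (by linarith) hs hD hm' hn)).trans ?_
      exact mul_le_mul_of_nonneg_right (by linarith) hM3
  have hf1 := hfeas a ha d hd
  have hf2 := hfeas c hc b hb
  have hupper : dist a b + dist c d - dist a d - dist c b ≤ 8 * (1 / (Δ : ℝ) ^ 33) := by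
    have e : 2 / (Δ : ℝ) ^ 33 = 2 * (1 / (Δ : ℝ) ^ 33) := by ring
    rw [e] at helig₁ helig₂ hf1 hf2
    linarith
  have h2 := hgap.trans (mul_le_mul_of_nonneg_right hupper hM3)
  have e : 8 * (1 / (Δ : ℝ) ^ 33) * (4 * (2 * (Δ : ℝ)) ^ 3) = 256 / (Δ : ℝ) ^ 30 := by
    field_simp
    norm_num
  rw [e, le_div_iff₀ (by positivity), one_mul] at h2
  have h3 : (9 : ℝ) ^ 30 ≤ (Δ : ℝ) ^ 30 := pow_le_pow_left₀ (by norm_num) hΔ1 30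
  norm_num at h3
  linarith
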